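/- Let R be a Noetherian normal domain and let M = ⊕_{i=0}^n M_i be a finitely generated reflexive semi-steady R-module. Then the dual M^* is also a semi-steady R-module (with indecomposable decomposition M^* = ⊕_{i=0}^n M_i^*). -/

import Mathlib

/-! The proof rests on the trace pairing `Hom(M, N) × Hom(N, M) → R`, `(f, g) ↦ tr (f ∘ g)`.
For `N` finite over an integrally closed domain `R` with fraction field `K`, the trace of an
endomorphism of `N`, computed on `K ⊗ N`, is integral over `R` and hence lies in `R`. When `N`
is moreover reflexive, the resulting map `Hom(M, N) → Hom(N, M)^*` is an isomorphism
(`exists_equiv_dual_hom`): composing it with restriction of functionals to the rank-one maps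
`ξ(·) m` gives the isomorphism `Hom(M, N) ≃ Hom(M, N^**)`, and that restriction is injective because
a nonzero multiple of every map `N → M` is a sum of rank-one maps (`exists_smul_eq_sum_smulRight`).

Write `X = ⊕ M_j`. Then `Hom(M_i^*, X^*) ≃ Hom(X, M_i^**) ≃ Hom(X, M_i) ≃ Hom(M_i, X)^*`. As
`N ∈ add M` implies `N^* ∈ add M^*`, dualizing the two alternatives for `Hom(M_i, X)` gives the two
alternatives for `Hom(M_i^*, X^*)`, and dualizing `R ∈ add X` gives `R ≃ R^* ∈ add X^*`.
Indecomposability passes to the dual because every idempotent of `M_i^*` is the transpose of an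
idempotent of `M_i`. -/

/- ## Preliminary definitions -/

open Module TensorProduct CategoryTheory

universe u

section Defs

variable (R : Type u) [CommRing R]

/-- `N ∈ add_R M` : `N` is isomorphic to a direct summand of a finite direct sum of
copies of `M`. -/
def MemAdd (M N : Type u) [AddCommGroup M] [Module R M] [AddCommGroup N] [Module R N] : Prop :=
  ∃ (k : ℕ) (P : ModuleCat.{u} R), Nonempty ((N × P) ≃ₗ[R] (Fin k → M))

/-- `M` is a generator, i.e. `R ∈ add_R M`. -/
def IsGeneratorModule (M : Type u) [AddCommGroup M] [Module R M] : Prop := MemAdd R M R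

/-- `M` is an indecomposable module: it is nonzero and admits no nontrivial
direct sum decomposition. -/
def IsIndecomposableModule (M : Type u) [AddCommGroup M] [Module R M] : Prop :=
  Nontrivial M ∧ ∀ A B : Submodule R M, IsCompl A B → A = ⊥ ∨ B = ⊥

/-- `M` is steady : `M` is a generator and `End_R(M) ∈ add_R M`. -/
def IsSteadyModule (M : Type u) [AddCommGroup M] [Module R M] : Prop :=
  IsGeneratorModule R M ∧ MemAdd R M (Module.End R M)

/-- The family `(M i)` (the indecomposable decomposition of `M = ⊕ i, M i`) is semi-steady:
`M` is a generator and, for each `i`, `Hom_R(M i, M) ∈ add_R M` or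
`Hom_R(M i, M) ∈ add_R M^*`. -/
def IsSemiSteadyFamily {m : ℕ} (M : Fin m → Type u) [∀ i, AddCommGroup (M i)]
    [∀ i, Module R (M i)] : Prop :=
  IsGeneratorModule R (∀ j, M j) ∧
  ∀ i, MemAdd R (∀ j, M j) (M i →ₗ[R] ∀ j, M j) ∨
       MemAdd R (Module.Dual R (∀ j, M j)) (M i →ₗ[R] ∀ j, M j)

/-- `M` has rank one: after tensoring with the fraction field of `R`, it becomes
one-dimensional. -/
def HasRankOne (M : Type u) [AddCommGroup M] [Module R M] : Prop :=
  Module.finrank (FractionRing R) (FractionRing R ⊗[R] M) = 1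

/-- A divisorial module: a finitely generated rank-one reflexive module. -/
def IsDivisorialModule (M : Type u) [AddCommGroup M] [Module R M] : Prop :=
  Module.Finite R M ∧ Module.IsReflexive R M ∧ HasRankOne R M

/-- The depth of a module over a (local) ring, defined as
`inf { i | Ext^i_R(R/m, M) ≠ 0 }`. -/
noncomputable def moduleDepth (hR : IsLocalRing R) (M : Type u) [AddCommGroup M]
    [Module R M] : ℕ∞ :=
  letI := hR
  sInf {i : ℕ∞ | ∃ k : ℕ, i = (k : ℕ∞) ∧
    ¬ Subsingleton ↥(((Ext R (ModuleCat.{u} R) k).obj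
        (Opposite.op (ModuleCat.of R (IsLocalRing.ResidueField R)))).obj (ModuleCat.of R M))}

/-- `M` is a maximal Cohen-Macaulay module over the local ring `R`:
its depth equals (i.e. is at least) the Krull dimension of `R`. -/
def IsMCM (M : Type u) [AddCommGroup M] [Module R M] : Prop :=
  ∀ hR : IsLocalRing R, ringKrullDim R ≤ (moduleDepth R hR M : WithBot ℕ∞)

end Defs

section GlobalDim

variable (Λ : Type u) [Ring Λ]

/-- The global dimension of the ring `Λ` is at most `d`, expressed via vanishing of
`Ext^{d+1}` on the category of `Λ`-modules. -/
def GlobalDimLE (d : ℕ) : Prop :=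
  ∀ M N : ModuleCat.{u} Λ,
    Subsingleton ↥(((Ext ℤ (ModuleCat.{u} Λ) (d + 1)).obj (Opposite.op M)).obj N)

/-- The global dimension of the ring `Λ`. -/
noncomputable def globalDim : ℕ∞ :=
  sInf {d : ℕ∞ | ∃ k : ℕ, d = (k : ℕ∞) ∧ GlobalDimLE Λ k}

end GlobalDim

section Order

variable (R : Type u) [CommRing R]

/-- `Λ` is a non-singular `R`-order: `Λ` is a module-finite `R`-algebra which is
maximal Cohen-Macaulay as an `R`-module, and `gl.dim Λ_p = dim R_p` for every
prime `p` of `R`. -/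
def IsNonsingularOrder (Λ : Type u) [Ring Λ] [Algebra R Λ] : Prop :=
  Module.Finite R Λ ∧ IsMCM R Λ ∧
  ∀ p : PrimeSpectrum R,
    (globalDim (Localization.AtPrime p.asIdeal ⊗[R] Λ) : WithBot ℕ∞) =
      ringKrullDim (Localization.AtPrime p.asIdeal)

/-- The nonzero finitely generated reflexive module `M` gives a non-commutative crepant
resolution (NCCR) of `R`, i.e. `End_R(M)` is a non-singular `R`-order. -/
def GivesNCCR (M : Type u) [AddCommGroup M] [Module R M] : Prop :=
  Module.Finite R M ∧ Module.IsReflexive R M ∧ Nontrivial M ∧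
  IsNonsingularOrder R (Module.End R M)

end Order

section Aux

variable {R : Type u} [CommRing R]

/-! ### Closure properties of `add M` -/

lemma MemAdd.congr {M M' N N' : Type u} [AddCommGroup M] [Module R M] [AddCommGroup N] [Module R N]
    [AddCommGroup M'] [Module R M'] [AddCommGroup N'] [Module R N']
    (h : MemAdd R M N) (e : M ≃ₗ[R] M') (e' : N ≃ₗ[R] N') : MemAdd R M' N' := by
  obtain ⟨k, P, ⟨f⟩⟩ := h
  exact ⟨k, P, ⟨(LinearEquiv.prodCongr e'.symm (.refl R P)).trans
    (f.trans (LinearEquiv.piCongrRight fun _ => e))⟩⟩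

/-- The dual of a finite product is the product of the duals. -/
noncomputable def dualPiEquiv {m : ℕ} (M : Fin m → Type u) [∀ i, AddCommGroup (M i)]
    [∀ i, Module R (M i)] : (∀ i, Dual R (M i)) ≃ₗ[R] Dual R (∀ i, M i) :=
  LinearMap.lsum R M R

lemma MemAdd.dual {M N : Type u} [AddCommGroup M] [Module R M] [AddCommGroup N] [Module R N]
    (h : MemAdd R M N) : MemAdd R (Dual R M) (Dual R N) := by
  obtain ⟨k, P, ⟨f⟩⟩ := h
  exact ⟨k, ModuleCat.of R (Dual R P), ⟨(dualProdDualEquivDual R N P).trans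
    (f.symm.dualMap.trans (dualPiEquiv fun _ : Fin k => M).symm)⟩⟩

/-! ### Indecomposability of duals -/

lemma isReflexive_component {m : ℕ} (M : Fin m → Type u) [∀ i, AddCommGroup (M i)]
    [∀ i, Module R (M i)] (h : IsReflexive R (∀ i, M i)) (i : Fin m) : IsReflexive R (M i) :=
  IsReflexive.of_split (LinearMap.single R M i) (LinearMap.proj i) (by ext x; simp)

lemma IsIndecomposableModule.dual {M : Type u} [AddCommGroup M] [Module R M] [IsReflexive R M]
    (h : IsIndecomposableModule R M) : IsIndecomposableModule R (Dual R M) := by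
  obtain ⟨hnt, hM⟩ := h
  refine ⟨?_, fun A B hAB => ?_⟩
  · by_contra hn
    rw [not_nontrivial_iff_subsingleton] at hn
    have : Nontrivial (Dual R (Dual R M)) := (evalEquiv R M).symm.toEquiv.nontrivial
    exact not_subsingleton (Dual R (Dual R M)) inferInstance
  -- `p` is the projection onto `A` along `B`, and `q` the endomorphism of `M`
  -- whose transpose is `p`.
  · set p : Module.End R (Dual R M) := A.projection B hAB
    let q : Module.End R M := (evalEquiv R M).symm.toLinearMap ∘ₗ p.dualMap ∘ₗ Dual.eval R M
    have hq : ∀ (ξ : Dual R M) (m : M), ξ (q m) = p ξ m := by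
      intro ξ m
      simp [q]
    have hsep : ∀ x y : M, (∀ ξ : Dual R M, ξ x = ξ y) → x = y := fun x y hxy =>
      (bijective_dual_eval R M).1 (LinearMap.ext hxy)
    have hpp : ∀ ξ, p (p ξ) = p ξ := fun ξ =>
      Submodule.projection_apply_of_mem_left hAB (Submodule.projection_apply_mem hAB ξ)
    have hqq : IsIdempotentElem q := by
      refine LinearMap.ext fun m => hsep _ _ fun ξ => ?_
      rw [Module.End.mul_apply, hq, hq, hpp, hq]
    rcases hM _ _ (LinearMap.IsIdempotentElem.isCompl hqq) with h0 | h0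
    · left
      have hq0 : q = 0 := LinearMap.range_eq_bot.1 h0
      refine (Submodule.eq_bot_iff _).2 fun ξ hξ => ?_
      have h1 : p ξ = ξ := Submodule.projection_apply_of_mem_left hAB hξ
      ext m
      rw [← h1, ← hq, hq0]; simp
    · right
      have hq1 : ∀ m, q m = m := fun m => by
        apply LinearMap.ker_eq_bot.1 h0
        exact LinearMap.congr_fun hqq m
      refine (Submodule.eq_bot_iff _).2 fun ξ hξ => ?_
      have h1 : p ξ = 0 := Submodule.projection_apply_of_mem_right hAB hξ
      ext m
      rw [← hq1 m, hq, h1]; rfl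

/-! ### Integrality of traces -/

/-- The eigenvalues of an integral matrix are integral, hence so is their sum. -/
lemma isIntegral_matrix_trace_of_isIntegral {L : Type*} [Field L] [IsAlgClosed L] [Algebra R L]
    {d : Type*} [Fintype d] [DecidableEq d] (A : Matrix d d L) (hA : IsIntegral R A) :
    IsIntegral R A.trace := by
  rw [Matrix.trace_eq_sum_roots_charpoly]
  refine IsIntegral.multiset_sum fun μ hμ => ?_
  have hσ : μ ∈ spectrum L A :=
    Matrix.mem_spectrum_iff_isRoot_charpoly.2 (Polynomial.isRoot_of_mem_roots hμ)
  obtain ⟨p, hmon, hp⟩ := hA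
  refine ⟨p, hmon, ?_⟩
  have h1 : Polynomial.aeval A (p.map (algebraMap R L)) = 0 := by
    rw [Polynomial.aeval_map_algebraMap]; exact hp
  have h2 := spectrum.subset_polynomial_aeval A (p.map (algebraMap R L)) ⟨μ, hσ, rfl⟩
  rw [h1] at h2
  have : Nonempty d := by
    by_contra hne
    rw [not_nonempty_iff] at hne
    simp [Matrix.charpoly] at hμ
  rw [spectrum.zero_eq] at h2
  simpa [Polynomial.eval_map] using h2

/-- Over an integrally closed domain, an endomorphism of a finite module has trace in `R`. -/
lemma exists_algebraMap_eq_trace [IsDomain R] [IsIntegrallyClosed R]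
    {N : Type u} [AddCommGroup N] [Module R N] [Module.Finite R N]
    (e : Module.End R N) : ∃ r : R, algebraMap R (FractionRing R) r =
      LinearMap.trace (FractionRing R) _ (e.baseChange (FractionRing R)) := by
  classical
  let K := FractionRing R
  let b := Module.finBasis K (K ⊗[R] N)
  have h0 : IsIntegral R e := Algebra.IsIntegral.isIntegral e
  have h1 : IsIntegral R (e.baseChange K) :=
    h0.map (Module.End.baseChangeHom R K N)
  have h2 : IsIntegral R (LinearMap.toMatrix b b (e.baseChange K)) :=
    h1.map ((LinearMap.toMatrixAlgEquiv b).toAlgHom.restrictScalars R)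
  have h3 := h2.map ((Algebra.ofId K (AlgebraicClosure K)).mapMatrix.restrictScalars R)
  have h4 := isIntegral_matrix_trace_of_isIntegral _ h3
  rw [← IsIntegrallyClosed.isIntegral_iff, LinearMap.trace_eq_matrix_trace K b]
  rw [← isIntegral_algebraMap_iff (FaithfulSMul.algebraMap_injective K (AlgebraicClosure K))]
  convert h4 using 1
  simp [Matrix.trace, Algebra.ofId_apply, K]

/-! ### The trace pairing -/

variable [IsDomain R]

/-- Generically every map out of a finite module is a sum of rank-one maps: take a maximal linearly
independent family `v` in a generating set of `N`; multiplication by some `r ≠ 0` carries `N` into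
the free module it spans, so that `r n = ∑ ξ_i(n) v_i` with functionals `ξ_i`. -/
lemma exists_smul_eq_sum_smulRight (N : Type u) [AddCommGroup N] [Module R N] [Module.Finite R N] :
    ∃ r : R, r ≠ 0 ∧ ∃ (ι : Type u) (_ : Fintype ι) (ξ : ι → Dual R N) (v : ι → N),
      ∀ n : N, r • n = ∑ i, ξ i n • v i := by
  classical
  obtain ⟨S, hS⟩ := Module.Finite.fg_top (R := R) (M := N)
  obtain ⟨s, hs, hmax⟩ := exists_maximal_linearIndepOn R (fun x : S => (x : N))
  have hmax' : ∀ i : S, ∃ a : R, a ≠ 0 ∧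
      a • (i : N) ∈ Submodule.span R ((fun x : S => (x : N)) '' s) := by
    intro i
    by_cases hi : i ∈ s
    · exact ⟨1, one_ne_zero, by rw [one_smul]; exact Submodule.subset_span ⟨i, hi, rfl⟩⟩
    · exact hmax i hi
  choose a ha0 ha using hmax'
  let r := ∏ i, a i
  have hr : ∀ n : N, r • n ∈ Submodule.span R ((fun x : S => (x : N)) '' s) := by
    intro n
    have hn : n ∈ Submodule.span R (S : Set N) := by rw [hS]; trivial
    induction hn using Submodule.span_induction with
    | mem x hx =>
      obtain ⟨c, hc⟩ := Finset.dvd_prod_of_mem a (Finset.mem_univ (⟨x, hx⟩ : S))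
      have : r • x = c • a ⟨x, hx⟩ • x := by
        rw [smul_smul, mul_comm c, ← hc]
      rw [this]
      exact Submodule.smul_mem _ _ (ha ⟨x, hx⟩)
    | zero => simp
    | add x y _ _ hx hy => rw [smul_add]; exact add_mem hx hy
    | smul c x _ hx => rw [smul_comm]; exact Submodule.smul_mem _ _ hx
  rw [Set.image_eq_range] at hr
  let b := Basis.span (v := fun x : s => ((x : S) : N)) hs
  let f : N →ₗ[R] Submodule.span R (Set.range fun x : s => ((x : S) : N)) :=
    LinearMap.codRestrict _ (r • LinearMap.id) hr
  refine ⟨r, Finset.prod_ne_zero_iff.2 fun i _ => ha0 i, s, inferInstance,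
    fun i => b.coord i ∘ₗ f, fun i => ((i : S) : N), fun n => ?_⟩
  have h := congrArg (Submodule.subtype _) (b.sum_repr (f n))
  rw [map_sum] at h
  have hf : Submodule.subtype _ (f n) = r • n := rfl
  rw [hf] at h
  rw [← h]
  refine Finset.sum_congr rfl fun i _ => ?_
  rw [map_smul]
  congr 1
  exact congrArg Subtype.val (Basis.span_apply hs i)

variable [IsIntegrallyClosed R]

/-- `Hom(M, N) ≃ Hom(N, M)^*` for `N` finite and reflexive, `M` arbitrary. The equivalence is built
in the direction sending `λ` to the `f` with `ξ (f m) = λ (ξ(·) m)`; its surjectivity is witnessed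
by the trace pairing. -/
lemma exists_equiv_dual_hom (M N : Type u) [AddCommGroup M] [Module R M] [AddCommGroup N]
    [Module R N] [Module.Finite R N] [IsReflexive R N] :
    Nonempty (Dual R (N →ₗ[R] M) ≃ₗ[R] (M →ₗ[R] N)) := by
  let rk : M →ₗ[R] Dual R N →ₗ[R] (N →ₗ[R] M) := (LinearMap.smulRightₗ (R := R) (M₂ := N)).flip
  let Φ₀ : Dual R (N →ₗ[R] M) →ₗ[R] (M →ₗ[R] Dual R (Dual R N)) :=
    { toFun := fun l => rk.compr₂ l
      map_add' := fun _ _ => rfl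
      map_smul' := fun _ _ => rfl }
  have hΦ₀ : ∀ l m ξ, Φ₀ l m ξ = l (ξ.smulRight m) := fun _ _ _ => rfl
  have hinj : Function.Injective Φ₀ := by
    refine (injective_iff_map_eq_zero Φ₀).2 fun l hl => ?_
    obtain ⟨r, hr, ι, _, ξ, v, h⟩ := exists_smul_eq_sum_smulRight (R := R) N
    ext g
    have hg : r • g = ∑ i, (ξ i).smulRight (g (v i)) := by
      ext n
      rw [LinearMap.smul_apply, ← map_smul, h n]
      simp
    have h1 : r • l g = 0 := by
      rw [← map_smul, hg, map_sum]
      refine Finset.sum_eq_zero fun i _ => ?_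
      rw [← hΦ₀, hl]; rfl
    simpa [hr] using h1
  have hsurj : Function.Surjective Φ₀ := by
    intro F
    let K := FractionRing R
    let f : M →ₗ[R] N := (evalEquiv R N).symm.toLinearMap ∘ₗ F
    let T : (N →ₗ[R] M) →ₗ[R] K :=
      ((LinearMap.trace K (K ⊗[R] N)).restrictScalars R) ∘ₗ
        (LinearMap.baseChangeHom R K N N) ∘ₗ (LinearMap.llcomp R N M N f)
    have hT : ∀ g, T g = LinearMap.trace K _ ((f ∘ₗ g).baseChange K) := fun _ => rfl
    choose t ht using fun g : N →ₗ[R] M => exists_algebraMap_eq_trace (f ∘ₗ g)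
    have hKinj : Function.Injective (algebraMap R K) := IsFractionRing.injective R K
    let l : Dual R (N →ₗ[R] M) :=
      { toFun := t
        map_add' := fun x y => hKinj (by
          rw [map_add, ht, ht, ht, ← hT, ← hT, ← hT, map_add])
        map_smul' := fun c x => hKinj (by
          rw [RingHom.id_apply, smul_eq_mul, map_mul, ht, ht, ← hT, ← hT, map_smul,
            Algebra.smul_def]) }
    refine ⟨l, ?_⟩
    ext m ξ
    rw [hΦ₀]
    apply hKinj
    have h1 : (f ∘ₗ ξ.smulRight m).baseChange K =
        (Dual.baseChange K ξ).smulRight ((1 : K) ⊗ₜ[R] f m) := by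
      ext n
      simp [TensorProduct.tmul_smul, TensorProduct.smul_tmul']
    refine (ht _).trans ?_
    rw [h1, LinearMap.trace_smulRight, Dual.baseChange_apply_tmul]
    simp [f, Algebra.smul_def]
  exact ⟨(LinearEquiv.ofBijective Φ₀ ⟨hinj, hsurj⟩).trans
    (LinearEquiv.congrRight (evalEquiv R N).symm)⟩

/-- `Hom(N, X)^* ≃ Hom(X, N) ≃ Hom(N^*, X^*)` for `N` finite and reflexive. -/
lemma exists_equiv_dual_hom_dual (X N : Type u) [AddCommGroup X] [Module R X] [AddCommGroup N]
    [Module R N] [Module.Finite R N] [IsReflexive R N] :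
    Nonempty (Dual R (N →ₗ[R] X) ≃ₗ[R] (Dual R N →ₗ[R] Dual R X)) := by
  obtain ⟨e⟩ := exists_equiv_dual_hom (R := R) X N
  exact ⟨e.trans ((LinearEquiv.congrRight (evalEquiv R N)).trans LinearMap.lflip)⟩

end Aux

/-- Let `R` be a Noetherian normal domain and let `M = ⊕_{i=0}^n M i`
be a finitely generated reflexive semi-steady `R`-module. Then the dual `M^*` is also
a semi-steady `R`-module, with indecomposable decomposition `M^* = ⊕_{i=0}^n (M i)^*`. -/
theorem dual_semisteady_of_semisteady
    (R : Type u) [CommRing R] [IsNoetherianRing R] [IsDomain R] [IsIntegrallyClosed R]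
    (n : ℕ) (M : Fin (n + 1) → Type u) [∀ i, AddCommGroup (M i)] [∀ i, Module R (M i)]
    [∀ i, Module.Finite R (M i)]
    (hrefl : Module.IsReflexive R (∀ i, M i))
    (hind : ∀ i, IsIndecomposableModule R (M i))
    (hss : IsSemiSteadyFamily R M) :
    (∀ i, IsIndecomposableModule R (Module.Dual R (M i))) ∧
      IsSemiSteadyFamily R (fun i => Module.Dual R (M i)) := by
  have hr : ∀ i, IsReflexive R (M i) := isReflexive_component M hrefl
  refine ⟨fun i => (hind i).dual, ?_, fun i => ?_⟩
  · exact hss.1.dual.congr (dualPiEquiv M).symm (LinearMap.ringLmapEquivSelf R R R)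
  · obtain ⟨e⟩ := exists_equiv_dual_hom_dual (R := R) (∀ j, M j) (M i)
    have e' := e.trans (LinearEquiv.congrRight (M := Dual R (M i)) (dualPiEquiv M).symm)
    rcases hss.2 i with h | h
    · exact Or.inl (h.dual.congr (dualPiEquiv M).symm e')
    · exact Or.inr (h.dual.congr (dualPiEquiv M).dualMap e')
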